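/- Define on W the operators J₊ := i T₊T̃₊, J₋ := −i T₋T̃₋, and J₀ := −(1/2)(T₋T̃₊ + T₊T̃₋). Then on each basis vector: J₀|j,m⟩ = m|j,m⟩, J₊|j,m⟩ = C₊(j,m)|j,m+1⟩ and J₋|j,m⟩ = C₋(j,m)|j,m−1⟩, where C₊(j,m) = i·√(j−m)·√(j+m+1) and C₋(j,m) = i·√(j+m)·√(j−m+1); consequently [J₀, J_±] = ±J_± and [J₊, J₋] = −2J₀, i.e. these operators realize the sl(2,ℝ) generator action on each subspace spanned by {|j,m⟩ : m fixed parity class} (generalized Jordan–Schwinger representation). -/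

import Mathlib

/-!
The generalized Jordan–Schwinger construction for sl(2,ℝ).

Fix ε (encoded by `E : ℂ` with `E = 0 ∨ E = 1/2`) and j₀ ∈ ℂ. The space W has basis
{|j,m⟩ : j ∈ j₀ + (1/2)ℤ, m − ε − (j − j₀) ∈ ℤ}, indexed by `(a,b) : ℤ × ℤ` via
j = j₀ + a/2, m = ε + a/2 + b; `single (a,b) 1` represents |j₀+a/2, ε+a/2+b⟩.
-/

noncomputable section

/-- Principal branch of the complex square root. -/
def csqrt (z : ℂ) : ℂ := z ^ ((1 : ℂ) / 2)

/-- C₊(j,m) = i √(j-m) √(j+m+1). -/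
def Cp (j m : ℂ) : ℂ := Complex.I * csqrt (j - m) * csqrt (j + m + 1)

/-- C₋(j,m) = i √(j+m) √(j-m+1). -/
def Cm (j m : ℂ) : ℂ := Complex.I * csqrt (j + m) * csqrt (j - m + 1)

/-- The Jordan–Schwinger space W. -/
abbrev WJS := (ℤ × ℤ) →₀ ℂ

/-- j = j₀ + a/2. -/
def jl (j₀ : ℂ) (a : ℤ) : ℂ := j₀ + (a : ℂ) / 2

/-- m = ε + a/2 + b. -/
def ml (E : ℂ) (a b : ℤ) : ℂ := E + (a : ℂ) / 2 + (b : ℂ)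

/-- T₋ |j,m⟩ = √(j−m+1) |j+1/2, m−1/2⟩. -/
def Tm (j₀ E : ℂ) : WJS →ₗ[ℂ] WJS :=
  Finsupp.lsum ℂ fun p => LinearMap.toSpanSingleton ℂ WJS
    (Finsupp.single (p.1 + 1, p.2 - 1) (csqrt (jl j₀ p.1 - ml E p.1 p.2 + 1)))

/-- T₊ |j,m⟩ = √(j+m+1) |j+1/2, m+1/2⟩. -/
def Tp (j₀ E : ℂ) : WJS →ₗ[ℂ] WJS :=
  Finsupp.lsum ℂ fun p => LinearMap.toSpanSingleton ℂ WJS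
    (Finsupp.single (p.1 + 1, p.2) (csqrt (jl j₀ p.1 + ml E p.1 p.2 + 1)))

/-- T̃₋ |j,m⟩ = −√(j+m) |j−1/2, m−1/2⟩. -/
def Ttm (j₀ E : ℂ) : WJS →ₗ[ℂ] WJS :=
  Finsupp.lsum ℂ fun p => LinearMap.toSpanSingleton ℂ WJS
    (Finsupp.single (p.1 - 1, p.2) (-csqrt (jl j₀ p.1 + ml E p.1 p.2)))

/-- T̃₊ |j,m⟩ = √(j−m) |j−1/2, m+1/2⟩. -/
def Ttp (j₀ E : ℂ) : WJS →ₗ[ℂ] WJS :=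
  Finsupp.lsum ℂ fun p => LinearMap.toSpanSingleton ℂ WJS
    (Finsupp.single (p.1 - 1, p.2 + 1) (csqrt (jl j₀ p.1 - ml E p.1 p.2)))

/-- J₊ := i T₊T̃₊. -/
def JSp (j₀ E : ℂ) : WJS →ₗ[ℂ] WJS := Complex.I • (Tp j₀ E ∘ₗ Ttp j₀ E)

/-- J₋ := −i T₋T̃₋. -/
def JSm (j₀ E : ℂ) : WJS →ₗ[ℂ] WJS := -Complex.I • (Tm j₀ E ∘ₗ Ttm j₀ E)

/-- J₀ := −(1/2)(T₋T̃₊ + T₊T̃₋). -/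
def JS0 (j₀ E : ℂ) : WJS →ₗ[ℂ] WJS :=
  -((1 : ℂ) / 2) • (Tm j₀ E ∘ₗ Ttp j₀ E + Tp j₀ E ∘ₗ Ttm j₀ E)

/-!
T̃₊ and T₋ move only j − m, with weights depending only on j − m, while T₊ and T̃₋ move only j + m,
with weights depending only on j + m. Hence the two pairs commute with each other. Within a pair,
the two square roots met along a round trip are equal, so whatever the branch they multiply to
T₋T̃₊ = j − m, T̃₊T₋ = j − m + 1, T₊T̃₋ = −(j + m), T̃₋T₊ = −(j + m + 1).
Thus [T̃₊, T₋] = [T₊, T̃₋] = 1, i.e. the four operators satisfy the canonical commutation relations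
of two oscillators, and the relations of sl(2) for J₀, J₊, J₋ follow in any ring from these.
-/

section Ring

variable {A : Type*} [Ring A]

theorem ring_mul_lie (x y z : A) : ⁅x * y, z⁆ = x * ⁅y, z⁆ + ⁅x, z⁆ * y := by
  simp only [Ring.lie_def]
  noncomm_ring

theorem ring_lie_mul (x y z : A) : ⁅x, y * z⁆ = ⁅x, y⁆ * z + y * ⁅x, z⁆ := by
  simp only [Ring.lie_def]
  noncomm_ring

/-- The canonical commutation relations of two oscillators in a ring, with annihilators `a`, `b`
and creators `aDag`, `bDag`. No involution is assumed: `aDag` and `bDag` need not be adjoints. -/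
structure IsTwoModeCCR (a aDag b bDag : A) : Prop where
  lie_a_aDag : ⁅a, aDag⁆ = 1
  lie_b_bDag : ⁅b, bDag⁆ = 1
  commute_a_b : Commute a b
  commute_a_bDag : Commute a bDag
  commute_aDag_b : Commute aDag b
  commute_aDag_bDag : Commute aDag bDag

namespace IsTwoModeCCR

variable {a aDag b bDag : A}

attribute [local instance] LieRing.ofAssociativeRing

theorem lie_weight_a (h : IsTwoModeCCR a aDag b bDag) : ⁅aDag * a + b * bDag, a⁆ = -a := by
  rw [add_lie, ring_mul_lie, ring_mul_lie, lie_self, ← lie_skew aDag a, h.lie_a_aDag,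
    h.commute_a_b.symm.lie_eq, h.commute_a_bDag.symm.lie_eq]
  noncomm_ring

theorem lie_weight_b (h : IsTwoModeCCR a aDag b bDag) : ⁅aDag * a + b * bDag, b⁆ = -b := by
  rw [add_lie, ring_mul_lie, ring_mul_lie, lie_self, ← lie_skew bDag b, h.lie_b_bDag,
    h.commute_a_b.lie_eq, h.commute_aDag_b.lie_eq]
  noncomm_ring

theorem lie_weight_aDag (h : IsTwoModeCCR a aDag b bDag) : ⁅aDag * a + b * bDag, aDag⁆ = aDag := by
  rw [add_lie, ring_mul_lie, ring_mul_lie, lie_self, h.lie_a_aDag,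
    h.commute_aDag_b.symm.lie_eq, h.commute_aDag_bDag.symm.lie_eq]
  noncomm_ring

theorem lie_weight_bDag (h : IsTwoModeCCR a aDag b bDag) : ⁅aDag * a + b * bDag, bDag⁆ = bDag := by
  rw [add_lie, ring_mul_lie, ring_mul_lie, lie_self, h.lie_b_bDag,
    h.commute_a_bDag.lie_eq, h.commute_aDag_bDag.lie_eq]
  noncomm_ring

theorem lie_weight_mul_annihilators (h : IsTwoModeCCR a aDag b bDag) :
    ⁅aDag * a + b * bDag, b * a⁆ = -(2 • (b * a)) := by
  rw [ring_lie_mul, h.lie_weight_a, h.lie_weight_b]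
  noncomm_ring

theorem lie_weight_mul_creators (h : IsTwoModeCCR a aDag b bDag) :
    ⁅aDag * a + b * bDag, aDag * bDag⁆ = 2 • (aDag * bDag) := by
  rw [ring_lie_mul, h.lie_weight_aDag, h.lie_weight_bDag, two_nsmul]

theorem lie_mul_annihilators_mul_creators (h : IsTwoModeCCR a aDag b bDag) :
    ⁅b * a, aDag * bDag⁆ = aDag * a + b * bDag := by
  rw [ring_mul_lie, ring_lie_mul, ring_lie_mul, h.lie_a_aDag, h.lie_b_bDag,
    h.commute_a_bDag.lie_eq, h.commute_aDag_b.symm.lie_eq]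
  noncomm_ring

end IsTwoModeCCR

end Ring

section WeightedShift

variable {ι R : Type*} [CommSemiring R]

/-- The weighted shift sending the basis vector `single p 1` to `w p • single (f p) 1`. The
operators T₋, T₊, T̃₋, T̃₊ are all of this form. -/
def weightedShift (f : ι → ι) (w : ι → R) : Module.End R (ι →₀ R) :=
  Finsupp.lsum R fun p => LinearMap.toSpanSingleton R (ι →₀ R) (Finsupp.single (f p) (w p))

theorem weightedShift_single (f : ι → ι) (w : ι → R) (p : ι) (c : R) :
    weightedShift f w (Finsupp.single p c) = Finsupp.single (f p) (c * w p) := by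
  simp [weightedShift]

theorem weightedShift_mul (f g : ι → ι) (w v : ι → R) :
    weightedShift f w * weightedShift g v =
      weightedShift (f ∘ g) fun p => w (g p) * v p := by
  refine Finsupp.lhom_ext fun p c => ?_
  simp only [Module.End.mul_apply, weightedShift_single, Function.comp_apply]
  congr 1
  ring

theorem weightedShift_commute {f g : ι → ι} {w v : ι → R} (hfg : Function.Commute f g)
    (hw : ∀ p, w (g p) = w p) (hv : ∀ p, v (f p) = v p) :
    Commute (weightedShift f w) (weightedShift g v) := by
  rw [commute_iff_eq, weightedShift_mul, weightedShift_mul, hfg.comp_eq]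
  simp only [hw, hv, mul_comm]

end WeightedShift

theorem csqrt_mul_self (z : ℂ) : csqrt z * csqrt z = z := by
  simp [csqrt, ← sq]

theorem jl_sub_ml (j₀ E : ℂ) (a b : ℤ) : jl j₀ a - ml E a b = j₀ - E - b := by
  simp only [jl, ml]
  ring

theorem jl_add_ml (j₀ E : ℂ) (a b : ℤ) : jl j₀ a + ml E a b = j₀ + E + (a + b : ℤ) := by
  simp only [jl, ml]
  push_cast
  ring

section Operators

variable (j₀ E : ℂ)

theorem Tm_eq_weightedShift :
    Tm j₀ E = weightedShift (fun p => (p.1 + 1, p.2 - 1))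
      fun p => csqrt (jl j₀ p.1 - ml E p.1 p.2 + 1) := rfl

theorem Tp_eq_weightedShift :
    Tp j₀ E = weightedShift (fun p => (p.1 + 1, p.2))
      fun p => csqrt (jl j₀ p.1 + ml E p.1 p.2 + 1) := rfl

theorem Ttm_eq_weightedShift :
    Ttm j₀ E = weightedShift (fun p => (p.1 - 1, p.2))
      fun p => -csqrt (jl j₀ p.1 + ml E p.1 p.2) := rfl

theorem Ttp_eq_weightedShift :
    Ttp j₀ E = weightedShift (fun p => (p.1 - 1, p.2 + 1))
      fun p => csqrt (jl j₀ p.1 - ml E p.1 p.2) := rfl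

theorem Tm_mul_Ttp :
    Tm j₀ E * Ttp j₀ E = weightedShift id fun p => jl j₀ p.1 - ml E p.1 p.2 := by
  rw [Tm_eq_weightedShift, Ttp_eq_weightedShift, weightedShift_mul]
  congr 1
  · ext p <;> simp
  · ext p
    have h : jl j₀ (p.1 - 1) - ml E (p.1 - 1) (p.2 + 1) + 1 = jl j₀ p.1 - ml E p.1 p.2 := by
      rw [jl_sub_ml, jl_sub_ml]; push_cast; ring
    rw [h, csqrt_mul_self]

theorem Ttp_mul_Tm :
    Ttp j₀ E * Tm j₀ E = weightedShift id fun p => jl j₀ p.1 - ml E p.1 p.2 + 1 := by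
  rw [Tm_eq_weightedShift, Ttp_eq_weightedShift, weightedShift_mul]
  congr 1
  · ext p <;> simp
  · ext p
    have h : jl j₀ (p.1 + 1) - ml E (p.1 + 1) (p.2 - 1) = jl j₀ p.1 - ml E p.1 p.2 + 1 := by
      rw [jl_sub_ml, jl_sub_ml]; push_cast; ring
    rw [h, csqrt_mul_self]

theorem Tp_mul_Ttm :
    Tp j₀ E * Ttm j₀ E = weightedShift id fun p => -(jl j₀ p.1 + ml E p.1 p.2) := by
  rw [Tp_eq_weightedShift, Ttm_eq_weightedShift, weightedShift_mul]
  congr 1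
  · ext p <;> simp
  · ext p
    have h : jl j₀ (p.1 - 1) + ml E (p.1 - 1) p.2 + 1 = jl j₀ p.1 + ml E p.1 p.2 := by
      rw [jl_add_ml, jl_add_ml]; push_cast; ring
    rw [h, mul_neg, csqrt_mul_self]

theorem Ttm_mul_Tp :
    Ttm j₀ E * Tp j₀ E = weightedShift id fun p => -(jl j₀ p.1 + ml E p.1 p.2 + 1) := by
  rw [Tp_eq_weightedShift, Ttm_eq_weightedShift, weightedShift_mul]
  congr 1
  · ext p <;> simp
  · ext p
    have h : jl j₀ (p.1 + 1) + ml E (p.1 + 1) p.2 = jl j₀ p.1 + ml E p.1 p.2 + 1 := by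
      rw [jl_add_ml, jl_add_ml]; push_cast; ring
    rw [h, neg_mul, csqrt_mul_self]

theorem lie_Ttp_Tm : ⁅Ttp j₀ E, Tm j₀ E⁆ = 1 := by
  refine Finsupp.lhom_ext fun p c => ?_
  rw [Ring.lie_def, Ttp_mul_Tm, Tm_mul_Ttp, LinearMap.sub_apply, weightedShift_single,
    weightedShift_single, ← Finsupp.single_sub, Module.End.one_apply, id_eq]
  congr 1
  ring

theorem lie_Tp_Ttm : ⁅Tp j₀ E, Ttm j₀ E⁆ = 1 := by
  refine Finsupp.lhom_ext fun p c => ?_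
  rw [Ring.lie_def, Tp_mul_Ttm, Ttm_mul_Tp, LinearMap.sub_apply, weightedShift_single,
    weightedShift_single, ← Finsupp.single_sub, Module.End.one_apply, id_eq]
  congr 1
  ring

theorem isTwoModeCCR : IsTwoModeCCR (Ttp j₀ E) (Tm j₀ E) (Tp j₀ E) (Ttm j₀ E) where
  lie_a_aDag := lie_Ttp_Tm j₀ E
  lie_b_bDag := lie_Tp_Ttm j₀ E
  commute_a_b := weightedShift_commute (fun p => by simp) (fun p => by simp only [jl_sub_ml])
    (fun p => by simp only [jl_add_ml, sub_add_add_cancel])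
  commute_a_bDag := weightedShift_commute (fun p => by simp) (fun p => by simp only [jl_sub_ml])
    (fun p => by simp only [jl_add_ml, sub_add_add_cancel])
  commute_aDag_b := weightedShift_commute (fun p => by simp) (fun p => by simp only [jl_sub_ml])
    (fun p => by simp only [jl_add_ml, add_add_sub_cancel])
  commute_aDag_bDag := weightedShift_commute (fun p => by simp) (fun p => by simp only [jl_sub_ml])
    (fun p => by simp only [jl_add_ml, add_add_sub_cancel])

section Brackets

attribute [local instance] LieRing.ofAssociativeRing

theorem lie_JS0_JSp : ⁅JS0 j₀ E, JSp j₀ E⁆ = JSp j₀ E := by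
  calc ⁅JS0 j₀ E, JSp j₀ E⁆
      = -((1 : ℂ) / 2) • Complex.I •
          ⁅Tm j₀ E * Ttp j₀ E + Tp j₀ E * Ttm j₀ E, Tp j₀ E * Ttp j₀ E⁆ := by
        rw [← lie_smul, ← smul_lie]; rfl
    _ = Complex.I • (Tp j₀ E * Ttp j₀ E) := by
        rw [(isTwoModeCCR j₀ E).lie_weight_mul_annihilators]
        module

theorem lie_JS0_JSm : ⁅JS0 j₀ E, JSm j₀ E⁆ = -JSm j₀ E := by
  calc ⁅JS0 j₀ E, JSm j₀ E⁆
      = -((1 : ℂ) / 2) • -Complex.I •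
          ⁅Tm j₀ E * Ttp j₀ E + Tp j₀ E * Ttm j₀ E, Tm j₀ E * Ttm j₀ E⁆ := by
        rw [← lie_smul, ← smul_lie]; rfl
    _ = -(-Complex.I • (Tm j₀ E * Ttm j₀ E)) := by
        rw [(isTwoModeCCR j₀ E).lie_weight_mul_creators]
        module

theorem lie_JSp_JSm : ⁅JSp j₀ E, JSm j₀ E⁆ = (-2 : ℂ) • JS0 j₀ E := by
  calc ⁅JSp j₀ E, JSm j₀ E⁆
      = Complex.I • -Complex.I • ⁅Tp j₀ E * Ttp j₀ E, Tm j₀ E * Ttm j₀ E⁆ := by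
        rw [← lie_smul, ← smul_lie]; rfl
    _ = Tm j₀ E * Ttp j₀ E + Tp j₀ E * Ttm j₀ E := by
        rw [(isTwoModeCCR j₀ E).lie_mul_annihilators_mul_creators, smul_smul, mul_neg,
          Complex.I_mul_I, neg_neg, one_smul]
    _ = (-2 : ℂ) • -((1 : ℂ) / 2) • (Tm j₀ E * Ttp j₀ E + Tp j₀ E * Ttm j₀ E) := by
        module

end Brackets

theorem JS0_single (a b : ℤ) :
    JS0 j₀ E (Finsupp.single (a, b) 1) = ml E a b • Finsupp.single (a, b) 1 := by
  rw [JS0, ← Module.End.mul_eq_comp, ← Module.End.mul_eq_comp, Tm_mul_Ttp, Tp_mul_Ttm,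
    LinearMap.smul_apply, LinearMap.add_apply, weightedShift_single, weightedShift_single,
    ← Finsupp.single_add, Finsupp.smul_single, Finsupp.smul_single, id_eq, smul_eq_mul, smul_eq_mul]
  congr 1
  ring

theorem JSp_single (a b : ℤ) :
    JSp j₀ E (Finsupp.single (a, b) 1) =
      Cp (jl j₀ a) (ml E a b) • Finsupp.single (a, b + 1) 1 := by
  have h : jl j₀ (a - 1) + ml E (a - 1) (b + 1) + 1 = jl j₀ a + ml E a b + 1 := by
    rw [jl_add_ml, jl_add_ml, sub_add_add_cancel]
  rw [JSp, LinearMap.smul_apply, LinearMap.comp_apply, Ttp_eq_weightedShift, Tp_eq_weightedShift,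
    weightedShift_single, weightedShift_single, h, sub_add_cancel, Finsupp.smul_single,
    Finsupp.smul_single, smul_eq_mul, smul_eq_mul, Cp]
  congr 1
  ring

theorem JSm_single (a b : ℤ) :
    JSm j₀ E (Finsupp.single (a, b) 1) =
      Cm (jl j₀ a) (ml E a b) • Finsupp.single (a, b - 1) 1 := by
  have h : jl j₀ (a - 1) - ml E (a - 1) b + 1 = jl j₀ a - ml E a b + 1 := by
    rw [jl_sub_ml, jl_sub_ml]
  rw [JSm, LinearMap.smul_apply, LinearMap.comp_apply, Ttm_eq_weightedShift, Tm_eq_weightedShift,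
    weightedShift_single, weightedShift_single, h, sub_add_cancel, Finsupp.smul_single,
    Finsupp.smul_single, smul_eq_mul, smul_eq_mul, Cm]
  congr 1
  ring

end Operators

theorem jordan_schwinger_general (j₀ E : ℂ) :
    (∀ a b : ℤ,
      JS0 j₀ E (Finsupp.single (a, b) 1) = ml E a b • Finsupp.single (a, b) 1) ∧
    (∀ a b : ℤ,
      JSp j₀ E (Finsupp.single (a, b) 1) =
        Cp (jl j₀ a) (ml E a b) • Finsupp.single (a, b + 1) 1) ∧
    (∀ a b : ℤ,
      JSm j₀ E (Finsupp.single (a, b) 1) =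
        Cm (jl j₀ a) (ml E a b) • Finsupp.single (a, b - 1) 1) ∧
    (JS0 j₀ E ∘ₗ JSp j₀ E - JSp j₀ E ∘ₗ JS0 j₀ E = JSp j₀ E) ∧
    (JS0 j₀ E ∘ₗ JSm j₀ E - JSm j₀ E ∘ₗ JS0 j₀ E = -JSm j₀ E) ∧
    (JSp j₀ E ∘ₗ JSm j₀ E - JSm j₀ E ∘ₗ JSp j₀ E = (-2 : ℂ) • JS0 j₀ E) :=
  ⟨JS0_single j₀ E, JSp_single j₀ E, JSm_single j₀ E, lie_JS0_JSp j₀ E, lie_JS0_JSm j₀ E,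
    lie_JSp_JSm j₀ E⟩

/-- The operators J₀ = −(1/2)(T₋T̃₊ + T₊T̃₋), J₊ = iT₊T̃₊, J₋ = −iT₋T̃₋
act on each basis vector by J₀|j,m⟩ = m|j,m⟩, J_±|j,m⟩ = C_±(j,m)|j,m±1⟩, and hence satisfy
[J₀,J_±] = ±J_±, [J₊,J₋] = −2J₀: they realize the sl(2,ℝ) generator action
(generalized Jordan–Schwinger representation). -/
theorem jordan_schwinger (j₀ E : ℂ) (hE : E = 0 ∨ E = 1 / 2) :
    (∀ a b : ℤ,
      JS0 j₀ E (Finsupp.single (a, b) 1) = ml E a b • Finsupp.single (a, b) 1) ∧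
    (∀ a b : ℤ,
      JSp j₀ E (Finsupp.single (a, b) 1) =
        Cp (jl j₀ a) (ml E a b) • Finsupp.single (a, b + 1) 1) ∧
    (∀ a b : ℤ,
      JSm j₀ E (Finsupp.single (a, b) 1) =
        Cm (jl j₀ a) (ml E a b) • Finsupp.single (a, b - 1) 1) ∧
    (JS0 j₀ E ∘ₗ JSp j₀ E - JSp j₀ E ∘ₗ JS0 j₀ E = JSp j₀ E) ∧
    (JS0 j₀ E ∘ₗ JSm j₀ E - JSm j₀ E ∘ₗ JS0 j₀ E = -JSm j₀ E) ∧
    (JSp j₀ E ∘ₗ JSm j₀ E - JSm j₀ E ∘ₗ JSp j₀ E = (-2 : ℂ) • JS0 j₀ E) :=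
  jordan_schwinger_general j₀ E

end
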